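/- For all integers k >= 0, m, j >= 0 and r >= 1, setting n = 2rm + kj, the number of k-paths in P_{n,k}^{rm,j} in which every u-segment has length divisible by r equals (1/(rm+1)) * C(rm+j, rm) * C((r+1)m+j, m). -/

import Mathlib

open Finset

inductive Step : Type
  | u | d | h
deriving DecidableEq

/-- Lengths of maximal blocks of letters with `wt s ≠ none`, weighted by `wt`. -/
def runs (wt : Step → Option ℕ) : List Step → List ℕ
  | [] => []
  | s :: l =>
    match wt s, runs wt l with
    | none, r => r
    | some n, r =>
      match l with
      | [] => [n]
      | s' :: _ =>
        match wt s' with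
        | none => n :: r
        | some _ =>
          match r with
          | a :: rest => (n + a) :: rest
          | [] => [n]

def uRuns : List Step → List ℕ :=
  runs (fun s => match s with | Step.u => some 1 | _ => none)

def uhRuns (k : ℕ) : List Step → List ℕ :=
  runs (fun s => match s with | Step.u => some 1 | Step.h => some k | Step.d => none)

def alpha (i : ℕ) (w : List Step) : ℕ := (uRuns w).count i

def beta (i : ℕ) (w : List Step) : ℕ := (uRuns w).tail.count i

def IsNonneg (w : List Step) : Prop :=
  ∀ i : ℕ, (w.take i).count Step.d ≤ (w.take i).count Step.u

def pathSet (m j : ℕ) : Set (List Step) :=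
  {w | w.count Step.u = m ∧ w.count Step.d = m ∧ w.count Step.h = j ∧ IsNonneg w}

/-- no horizontal step lies on the x-axis -/
def NoLowH (w : List Step) : Prop :=
  ∀ (i : ℕ) (hi : i < w.length), w[i]'hi = Step.h →
    (w.take i).count Step.u ≠ (w.take i).count Step.d

def qSet (m j : ℕ) : Set (List Step) :=
  {w | w ∈ pathSet m j ∧ NoLowH w}

/-- normalized partial Bell polynomial (r!/m!) B_{m,r}(1!t₁,2!t₂,…) -/
def bellNorm (m r : ℕ) (t : ℕ → ℚ) : ℚ :=
  ∑ f : Fin m → Fin (m + 1),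
    if (∑ i : Fin m, (f i : ℕ)) = r ∧ (∑ i : Fin m, ((i : ℕ) + 1) * (f i : ℕ)) = m then
      (r.factorial : ℚ) / (∏ i : Fin m, ((f i : ℕ).factorial : ℚ)) * ∏ i : Fin m, t ((i : ℕ) + 1) ^ (f i : ℕ)
    else 0

/-- normalized potential polynomial  P_p^{(lam)}(1!t₁,2!t₂,…)/p! -/
def potential (lam p : ℕ) (t : ℕ → ℚ) : ℚ :=
  ∑ r ∈ Finset.range (p + 1), (Nat.choose lam r : ℚ) * bellNorm p r t



namespace S5

instance : Finite Step :=
  Finite.of_injective (fun s : Step => match s with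
    | Step.u => (0 : Fin 3) | Step.d => 1 | Step.h => 2)
    (by intro a b h; cases a <;> cases b <;> simp_all)

/-- nonnegativity when starting from height `s` -/
def NN (s : ℕ) (w : List Step) : Prop :=
  ∀ i : ℕ, (w.take i).count Step.d ≤ s + (w.take i).count Step.u

def Dv (r : ℕ) (w : List Step) : Prop := ∀ a ∈ uRuns w, r ∣ a

theorem NN_nil (s : ℕ) : NN s [] := by intro i; simp

theorem NN_u (s : ℕ) (w : List Step) : NN s (Step.u :: w) ↔ NN (s + 1) w := by
  constructor
  · intro H i
    have := H (i + 1)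
    simp at this
    omega
  · intro H i
    cases i with
    | zero => simp
    | succ i => have := H i; simp; omega

theorem NN_h (s : ℕ) (w : List Step) : NN s (Step.h :: w) ↔ NN s w := by
  constructor
  · intro H i
    have := H (i + 1)
    simpa using this
  · intro H i
    cases i with
    | zero => simp
    | succ i => have := H i; simpa using this

theorem NN_d (s : ℕ) (w : List Step) : NN s (Step.d :: w) ↔ 1 ≤ s ∧ NN (s - 1) w := by
  constructor
  · intro H
    have h1 := H 1
    simp at h1
    refine ⟨h1, fun i => ?_⟩
    have := H (i + 1)
    simp at this
    omega
  · rintro ⟨h1, H⟩ i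
    cases i with
    | zero => simp
    | succ i => have := H i; simp; omega

theorem NN_rep (p : ℕ) : ∀ (s : ℕ) (w : List Step),
    NN s (List.replicate p Step.u ++ w) ↔ NN (s + p) w := by
  induction p with
  | zero => intro s w; simp
  | succ p ih =>
    intro s w
    rw [List.replicate_succ, List.cons_append, NN_u, ih]
    have : s + 1 + p = s + (p + 1) := by omega
    rw [this]

theorem uRuns_d (w : List Step) : uRuns (Step.d :: w) = uRuns w := by
  simp [uRuns, runs]

theorem uRuns_h (w : List Step) : uRuns (Step.h :: w) = uRuns w := by
  simp [uRuns, runs]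

theorem uRuns_one (w : List Step) (hw : w.head? ≠ some Step.u) :
    uRuns (Step.u :: w) = 1 :: uRuns w := by
  rcases w with _ | ⟨s, w⟩
  · simp [uRuns, runs]
  · cases s
    · simp at hw
    · simp [uRuns, runs]
    · simp [uRuns, runs]

theorem uRuns_uu (w : List Step) (a : ℕ) (l : List ℕ)
    (h : uRuns (Step.u :: w) = a :: l) :
    uRuns (Step.u :: Step.u :: w) = (1 + a) :: l := by
  unfold uRuns at *
  rw [runs]
  simp only [h]

theorem uRuns_rep (w : List Step) (hw : w.head? ≠ some Step.u) (p : ℕ) :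
    uRuns (List.replicate (p + 1) Step.u ++ w) = (p + 1) :: uRuns w := by
  induction p with
  | zero => simpa using uRuns_one w hw
  | succ p ih =>
    rw [List.replicate_succ, List.cons_append] at ih ⊢
    rw [List.replicate_succ, List.cons_append]
    rw [uRuns_uu _ _ _ ih, Nat.add_comm 1]

theorem Dv_rep (r : ℕ) (w : List Step) (hw : w.head? ≠ some Step.u) (p : ℕ) :
    Dv r (List.replicate p Step.u ++ w) ↔ r ∣ p ∧ Dv r w := by
  cases p with
  | zero => simp
  | succ p => simp [Dv, uRuns_rep w hw p]

theorem decomp (w : List Step) : ∃ p w', w = List.replicate p Step.u ++ w' ∧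
    w'.head? ≠ some Step.u := by
  induction w with
  | nil => exact ⟨0, [], by simp, by simp⟩
  | cons s w ih =>
    obtain ⟨p, w', h, h'⟩ := ih
    cases s
    · exact ⟨p + 1, w', by simp [h, List.replicate_succ], h'⟩
    · exact ⟨0, Step.d :: w, by simp, by simp⟩
    · exact ⟨0, Step.h :: w, by simp, by simp⟩

theorem Dv_r (r : ℕ) (w : List Step) : Dv r (List.replicate r Step.u ++ w) ↔ Dv r w := by
  obtain ⟨p, w', rfl, h⟩ := decomp w
  rw [← List.append_assoc, ← List.replicate_add, Dv_rep r w' h, Dv_rep r w' h]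
  simp

theorem Dv_u (r : ℕ) (w : List Step) (h : Dv r (Step.u :: w)) :
    ∃ w', Step.u :: w = List.replicate r Step.u ++ w' := by
  obtain ⟨p, w', e, h'⟩ := decomp (Step.u :: w)
  rw [e, Dv_rep r w' h'] at h
  have hp : p ≠ 0 := by
    rintro rfl
    simp at e
    subst e
    simp at h'
  have hle : r ≤ p := Nat.le_of_dvd (Nat.pos_of_ne_zero hp) h.1
  refine ⟨List.replicate (p - r) Step.u ++ w', ?_⟩
  rw [e, ← List.append_assoc, ← List.replicate_add]
  congr 2
  omega

def T (r a b j : ℕ) : Set (List Step) :=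
  {w | w.count Step.u = r * a ∧ w.count Step.d = b ∧ w.count Step.h = j ∧
    NN (b - r * a) w ∧ Dv r w}

theorem len (w : List Step) :
    w.length = w.count Step.u + w.count Step.d + w.count Step.h := by
  induction w with
  | nil => simp
  | cons s w ih => cases s <;> simp [ih] <;> omega

theorem T_fin (r a b j : ℕ) : (T r a b j).Finite := by
  refine (List.finite_length_eq Step (r * a + b + j)).subset ?_
  rintro w ⟨h1, h2, h3, -⟩
  simp [len, h1, h2, h3]

theorem T_split (r a b j : ℕ) (hne : a + b + j ≠ 0) (hr : 1 ≤ r) : T r a b j =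
    (fun w => List.replicate r Step.u ++ w) '' {w | List.replicate r Step.u ++ w ∈ T r a b j} ∪
    ((fun w => Step.d :: w) '' {w | Step.d :: w ∈ T r a b j} ∪
    (fun w => Step.h :: w) '' {w | Step.h :: w ∈ T r a b j}) := by
  ext w
  constructor
  · intro hw
    rcases w with _ | ⟨s, w⟩
    · obtain ⟨h1, h2, h3, -⟩ := hw
      simp at h1 h2 h3
      omega
    · cases s
      · left
        obtain ⟨w', e⟩ := Dv_u r w hw.2.2.2.2
        exact ⟨w', by rw [Set.mem_ofPred_eq, ← e]; exact hw, e.symm⟩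
      · right; left; exact ⟨w, hw, rfl⟩
      · right; right; exact ⟨w, hw, rfl⟩
  · rintro (⟨w', h, rfl⟩ | ⟨w', h, rfl⟩ | ⟨w', h, rfl⟩) <;> exact h

theorem T_card_split (r a b j : ℕ) (hne : a + b + j ≠ 0) (hr : 1 ≤ r) : (T r a b j).ncard =
    {w | List.replicate r Step.u ++ w ∈ T r a b j}.ncard +
    ({w | Step.d :: w ∈ T r a b j}.ncard + {w | Step.h :: w ∈ T r a b j}.ncard) := by
  have i1 : Function.Injective (fun w => List.replicate r Step.u ++ w) :=
    fun x y h => List.append_cancel_left h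
  have i2 : Function.Injective (fun w => Step.d :: w) := fun x y h => by simpa using h
  have i3 : Function.Injective (fun w => Step.h :: w) := fun x y h => by simpa using h
  have f1 : {w | List.replicate r Step.u ++ w ∈ T r a b j}.Finite := (T_fin r a b j).preimage (i1.injOn)
  have f2 : {w | Step.d :: w ∈ T r a b j}.Finite := (T_fin r a b j).preimage (i2.injOn)
  have f3 : {w | Step.h :: w ∈ T r a b j}.Finite := (T_fin r a b j).preimage (i3.injOn)
  conv_lhs => rw [T_split r a b j hne hr]
  rw [Set.ncard_union_eq _ (f1.image _) ((f2.image _).union (f3.image _)),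
    Set.ncard_union_eq _ (f2.image _) (f3.image _), Set.ncard_image_of_injective _ i1,
    Set.ncard_image_of_injective _ i2, Set.ncard_image_of_injective _ i3]
  · rw [Set.disjoint_left]
    rintro _ ⟨x, -, rfl⟩ ⟨y, -, h⟩
    simp at h
  · obtain ⟨q, rfl⟩ : ∃ q, r = q + 1 := ⟨r - 1, by omega⟩
    rw [Set.disjoint_left]
    rintro _ ⟨x, -, rfl⟩ (⟨y, -, h⟩ | ⟨y, -, h⟩) <;> simp [List.replicate_succ] at h

theorem T_U (r a b j : ℕ) (hle : r * (a + 1) ≤ b) :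
    {w | List.replicate r Step.u ++ w ∈ T r (a + 1) b j} = T r a b j := by
  ext w
  have e : b - r * (a + 1) + r = b - r * a := by
    rw [Nat.mul_succ] at *; omega
  have e2 : r + List.count Step.u w = r * (a + 1) ↔ List.count Step.u w = r * a := by
    rw [Nat.mul_succ]; omega
  simp [T, NN_rep, Dv_r, e, List.count_replicate, e2]

theorem T_U0 (r b j : ℕ) (hr : 1 ≤ r) :
    {w | List.replicate r Step.u ++ w ∈ T r 0 b j} = ∅ := by
  ext w
  simp [T, List.count_replicate]
  omega

theorem T_D (r a b j : ℕ) (hle : r * a ≤ b) :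
    {w | Step.d :: w ∈ T r a (b + 1) j} = T r a b j := by
  ext w
  have e : b + 1 - r * a - 1 = b - r * a := by omega
  have e2 : 1 ≤ b + 1 - r * a := by omega
  simp [T, NN_d, Dv, uRuns_d, e, e2]

theorem T_D0 (r a b j : ℕ) (hle : b ≤ r * a) :
    {w | Step.d :: w ∈ T r a b j} = ∅ := by
  ext w
  have e2 : b - r * a = 0 := by omega
  simp [T, NN_d, e2]

theorem T_H (r a b j : ℕ) :
    {w | Step.h :: w ∈ T r a b (j + 1)} = T r a b j := by
  ext w
  simp [T, NN_h, Dv, uRuns_h]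

theorem T_H0 (r a b : ℕ) :
    {w | Step.h :: w ∈ T r a b 0} = ∅ := by
  ext w
  simp [T]

theorem T_card (r : ℕ) (hr : 1 ≤ r) (N : ℕ) : ∀ a b j : ℕ, a + b + j = N → r * a ≤ b →
    ((T r a b j).ncard : ℚ) * (a.factorial * (b + 1).factorial * j.factorial) =
      (b + 1 - r * a) * N.factorial := by
  induction N with
  | zero =>
    intro a b j h _
    obtain ⟨rfl, rfl, rfl⟩ : a = 0 ∧ b = 0 ∧ j = 0 := by omega
    have : T r 0 0 0 = {[]} := by
      ext w
      simp only [T, Set.mem_ofPred_eq, Set.mem_singleton_iff]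
      constructor
      · rintro ⟨h1, h2, h3, -⟩
        apply List.length_eq_zero_iff.1
        rw [len]; omega
      · rintro rfl
        simp [NN_nil, Dv, uRuns, runs]
    simp [this]
  | succ N ih =>
    intro a b j h hle
    rw [T_card_split r a b j (by omega) hr]
    have hU : (({w | List.replicate r Step.u ++ w ∈ T r a b j}.ncard : ℕ) : ℚ) *
        (a.factorial * (b + 1).factorial * j.factorial) =
        a * (b + 1 + r - r * a) * N.factorial := by
      cases a with
      | zero => rw [T_U0 r b j hr]; simp
      | succ a =>
        rw [T_U r a b j hle]
        have := ih a b j (by omega) (by rw [Nat.mul_succ] at hle; omega)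
        rw [Nat.factorial_succ a]
        push_cast
        linear_combination ((a : ℚ) + 1) * this
    have hD : (({w | Step.d :: w ∈ T r a b j}.ncard : ℕ) : ℚ) *
        (a.factorial * (b + 1).factorial * j.factorial) =
        (b + 1) * (b - r * a) * N.factorial := by
      rcases Nat.lt_or_ge (r * a) b with hlt | hge
      · obtain ⟨b, rfl⟩ : ∃ c, b = c + 1 := ⟨b - 1, by omega⟩
        rw [T_D r a b j (by omega)]
        have := ih a b j (by omega) (by omega)
        rw [Nat.factorial_succ (b + 1)]
        push_cast
        linear_combination ((b : ℚ) + 2) * this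
      · rw [T_D0 r a b j hge]
        have : (b : ℚ) = r * a := by exact_mod_cast le_antisymm hge hle
        simp [this]
    have hH : (({w | Step.h :: w ∈ T r a b j}.ncard : ℕ) : ℚ) *
        (a.factorial * (b + 1).factorial * j.factorial) =
        j * (b + 1 - r * a) * N.factorial := by
      cases j with
      | zero => rw [T_H0 r a b]; simp
      | succ j =>
        rw [T_H r a b j]
        have := ih a b j (by omega) hle
        rw [Nat.factorial_succ j]
        push_cast
        linear_combination ((j : ℚ) + 1) * this
    have hN : (N : ℚ) + 1 = a + b + j := by exact_mod_cast h.symm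
    rw [Nat.factorial_succ N]
    push_cast
    rw [hN]
    linear_combination hU + hD + hH

end S5

theorem stmt5 (k m j r : ℕ) (hr : 1 ≤ r) :
    (Set.ncard {w ∈ pathSet (r * m) j | ∀ a ∈ uRuns w, r ∣ a} : ℚ) =
      (1 : ℚ) / (r * m + 1) * Nat.choose (r * m + j) (r * m) *
        Nat.choose ((r + 1) * m + j) m := by
  have hset : {w ∈ pathSet (r * m) j | ∀ a ∈ uRuns w, r ∣ a} = S5.T r m (r * m) j := by
    ext w
    simp [pathSet, S5.T, S5.NN, S5.Dv, IsNonneg, and_assoc]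
  rw [hset]
  have key := S5.T_card r hr (m + r * m + j) m (r * m) j rfl le_rfl
  have e1 := Nat.add_choose_mul_factorial_mul_factorial j (r * m)
  have e2 := Nat.add_choose_mul_factorial_mul_factorial (r * m + j) m
  have e3 : (r + 1) * m + j = r * m + j + m := by ring
  have e4 : m + r * m + j = r * m + j + m := by ring
  rw [e3]
  rw [e4] at key
  rw [Nat.add_comm j] at e1
  rw [← e2, ← e1, Nat.factorial_succ] at key
  have p1 : (m.factorial : ℚ) ≠ 0 := by exact_mod_cast m.factorial_ne_zero
  have p2 : ((r * m).factorial : ℚ) ≠ 0 := by exact_mod_cast (r * m).factorial_ne_zero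
  have p3 : (j.factorial : ℚ) ≠ 0 := by exact_mod_cast j.factorial_ne_zero
  have p4 : (r * m + 1 : ℚ) ≠ 0 := by positivity
  push_cast at key
  have p5 := mul_ne_zero (mul_ne_zero p1 p2) p3
  apply mul_right_cancel₀ (mul_ne_zero p4 p5)
  field_simp
  apply mul_right_cancel₀ p5
  linear_combination key
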